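/- arXiv:math/0412312 — 7 statements merged into one kernel-verified Lean document; each statement's English description precedes it below -/
import Mathlib

section
/- Let u, v, w ∈ ℝ⁷ be linearly independent. The 3-dimensional subspace V = span_ℝ{u, v, w} is closed under the cross product (i.e. a × b ∈ V for all a, b ∈ V) if and only if the 1-form x ↦ (∗φ)(u, v, w, x) is identically zero on ℝ⁷. -/
/-!
STATEMENT 0: For linearly independent u, v, w ∈ ℝ⁷, the subspace
V = span{u,v,w} is closed under the G₂ cross product iff the 1-form
x ↦ (∗φ)(u,v,w,x) vanishes identically.
-/

noncomputable section

/-- ℝ⁷ with coordinates (x₀,x₁,x₂,x₃,y₁,y₂,y₃) indexed 0,…,6. -/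
abbrev V7 := Fin 7 → ℝ

/-- Standard basis vector. -/
def e7 (k : Fin 7) : V7 := fun j => if j = k then 1 else 0

/-- The wedge of three coordinate 1-forms, `(e^p ∧ e^q ∧ e^r)(a,b,c)`. -/
def form3 (p q r : Fin 7) (a b c : V7) : ℝ :=
  Matrix.det !![a p, a q, a r; b p, b q, b r; c p, c q, c r]

/-- The standard G₂ 3-form φ = f¹∧f²∧f³ + f¹∧(e⁰∧e¹ − e²∧e³)
    + f²∧(e⁰∧e² − e³∧e¹) + f³∧(e⁰∧e³ − e¹∧e²), with e⁰,e¹,e²,e³,f¹,f²,f³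
    the coordinate 1-forms indexed 0,1,2,3,4,5,6. -/
def phi7 (a b c : V7) : ℝ :=
  form3 4 5 6 a b c
    + (form3 4 0 1 a b c - form3 4 2 3 a b c)
    + (form3 5 0 2 a b c - form3 5 3 1 a b c)
    + (form3 6 0 3 a b c - form3 6 1 2 a b c)

/-- The wedge of four coordinate 1-forms. -/
def form4 (p q r s : Fin 7) (a b c d : V7) : ℝ :=
  Matrix.det !![a p, a q, a r, a s; b p, b q, b r, b s;
                c p, c q, c r, c s; d p, d q, d r, d s]

/-- The dual 4-form ∗φ = e⁰∧e¹∧e²∧e³ − f²∧f³∧(e⁰∧e¹ − e²∧e³)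
    − f³∧f¹∧(e⁰∧e² − e³∧e¹) − f¹∧f²∧(e⁰∧e³ − e¹∧e²). -/
def starphi7 (a b c d : V7) : ℝ :=
  form4 0 1 2 3 a b c d
    - (form4 5 6 0 1 a b c d - form4 5 6 2 3 a b c d)
    - (form4 6 4 0 2 a b c d - form4 6 4 3 1 a b c d)
    - (form4 4 5 0 3 a b c d - form4 4 5 1 2 a b c d)

/-- The cross product, characterized by ⟨u × v, z⟩ = φ(u,v,z) for the
    standard inner product; its k-th coordinate is φ(u,v,e_k). -/
def cross7 (a b : V7) : V7 := fun k => phi7 a b (e7 k)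

lemma aux_cross (a b : V7) : cross7 a b =
   ![a 1 * b 4 - a 4 * b 1 + (a 2 * b 5 - a 5 * b 2) + (a 3 * b 6 - a 6 * b 3),
     a 4 * b 0 - a 0 * b 4 - (a 5 * b 3 - a 3 * b 5) - (a 2 * b 6 - a 6 * b 2),
     a 5 * b 0 - a 0 * b 5 - (a 3 * b 4 - a 4 * b 3) - (a 6 * b 1 - a 1 * b 6),
     a 6 * b 0 - a 0 * b 6 - (a 4 * b 2 - a 2 * b 4) - (a 1 * b 5 - a 5 * b 1),
     a 5 * b 6 - a 6 * b 5 + (a 0 * b 1 - a 1 * b 0) - (a 2 * b 3 - a 3 * b 2),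
     a 6 * b 4 - a 4 * b 6 + (a 0 * b 2 - a 2 * b 0) - (a 3 * b 1 - a 1 * b 3),
     a 4 * b 5 - a 5 * b 4 + (a 0 * b 3 - a 3 * b 0) - (a 1 * b 2 - a 2 * b 1)] := by
  funext k
  fin_cases k <;> simp [cross7, phi7, form3, Matrix.det_fin_three, e7] <;> ring

lemma aux_form4 (p q r s : Fin 7) (a b c d : V7) : form4 p q r s a b c d =
    (a p * b q - a q * b p) * (c r * d s - c s * d r)
    - (a p * b r - a r * b p) * (c q * d s - c s * d q)
    + (a p * b s - a s * b p) * (c q * d r - c r * d q)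
    + (a q * b r - a r * b q) * (c p * d s - c s * d p)
    - (a q * b s - a s * b q) * (c p * d r - c r * d p)
    + (a r * b s - a s * b r) * (c p * d q - c q * d p) := by
  simp [form4, Matrix.det_succ_row_zero, Fin.sum_univ_succ, Fin.succAbove]
  ring

/-- The standard inner product. -/
def ip7 (a b : V7) : ℝ :=
  a 0 * b 0 + a 1 * b 1 + a 2 * b 2 + a 3 * b 3 + a 4 * b 4 + a 5 * b 5 + a 6 * b 6

lemma ip7_self {a : V7} (h : ip7 a a = 0) : a = 0 := by
  unfold ip7 at h
  have h0 := mul_self_nonneg (a 0)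
  have h1 := mul_self_nonneg (a 1)
  have h2 := mul_self_nonneg (a 2)
  have h3 := mul_self_nonneg (a 3)
  have h4 := mul_self_nonneg (a 4)
  have h5 := mul_self_nonneg (a 5)
  have h6 := mul_self_nonneg (a 6)
  funext k
  fin_cases k <;> simp <;> apply mul_self_eq_zero.mp <;> linarith

/-- The vector dual to the 1-form. -/
def chi7 (a b c : V7) : V7 := cross7 a (cross7 b c) + ip7 a b • c - ip7 a c • b

lemma cr0 (a b : V7) : cross7 a b 0 =
    a 1 * b 4 - a 4 * b 1 + (a 2 * b 5 - a 5 * b 2) + (a 3 * b 6 - a 6 * b 3) := by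
  rw [aux_cross]; rfl

lemma cr1 (a b : V7) : cross7 a b 1 =
    a 4 * b 0 - a 0 * b 4 - (a 5 * b 3 - a 3 * b 5) - (a 2 * b 6 - a 6 * b 2) := by
  rw [aux_cross]; rfl

lemma cr2 (a b : V7) : cross7 a b 2 =
    a 5 * b 0 - a 0 * b 5 - (a 3 * b 4 - a 4 * b 3) - (a 6 * b 1 - a 1 * b 6) := by
  rw [aux_cross]; rfl

lemma cr3 (a b : V7) : cross7 a b 3 =
    a 6 * b 0 - a 0 * b 6 - (a 4 * b 2 - a 2 * b 4) - (a 1 * b 5 - a 5 * b 1) := by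
  rw [aux_cross]; rfl

lemma cr4 (a b : V7) : cross7 a b 4 =
    a 5 * b 6 - a 6 * b 5 + (a 0 * b 1 - a 1 * b 0) - (a 2 * b 3 - a 3 * b 2) := by
  rw [aux_cross]; rfl

lemma cr5 (a b : V7) : cross7 a b 5 =
    a 6 * b 4 - a 4 * b 6 + (a 0 * b 2 - a 2 * b 0) - (a 3 * b 1 - a 1 * b 3) := by
  rw [aux_cross]; rfl

lemma cr6 (a b : V7) : cross7 a b 6 =
    a 4 * b 5 - a 5 * b 4 + (a 0 * b 3 - a 3 * b 0) - (a 1 * b 2 - a 2 * b 1) := by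
  rw [aux_cross]; rfl

lemma star_chi (a b c x : V7) : starphi7 a b c x = ip7 (chi7 a b c) x := by
  simp only [starphi7, aux_form4, chi7, Pi.add_apply, Pi.sub_apply, Pi.smul_apply, smul_eq_mul,
    cr0, cr1, cr2, cr3, cr4, cr5, cr6, ip7]
  ring

lemma star_zero_iff (a b c : V7) : (∀ x, starphi7 a b c x = 0) ↔ chi7 a b c = 0 := by
  constructor
  · intro h
    apply ip7_self
    rw [← star_chi, h]
  · intro h x
    rw [star_chi, h]
    simp [ip7]

lemma star_cyc (a b c x : V7) : starphi7 b c a x = starphi7 a b c x := by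
  simp only [starphi7, aux_form4]
  ring

lemma ip_lin (a b c d : V7) (r s t : ℝ) :
    ip7 d (r • a + s • b + t • c) = r * ip7 d a + s * ip7 d b + t * ip7 d c := by
  simp only [ip7, Pi.add_apply, Pi.smul_apply, smul_eq_mul]
  ring

lemma star_1 (a b c : V7) : starphi7 a b c a = 0 := by
  simp only [starphi7, aux_form4]
  ring

lemma cross_lin (a b c d : V7) (r s t : ℝ) :
    cross7 (r • a + s • b + t • c) d = r • cross7 a d + s • cross7 b d + t • cross7 c d := by
  simp only [aux_cross]
  funext k
  fin_cases k <;> simp <;> ring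

lemma cross_anti (a b : V7) : cross7 a b = - cross7 b a := by
  simp only [aux_cross]
  funext k
  fin_cases k <;> simp <;> ring

lemma cross7_cross7 (a b : V7) : cross7 a (cross7 a b) = ip7 a b • a - ip7 a a • b := by
  simp only [aux_cross, ip7]
  funext k
  fin_cases k <;> simp <;> ring

lemma key (u v w : V7) (h : ∀ r s t : ℝ, r • u + s • v + t • w = 0 → r = 0 ∧ s = 0 ∧ t = 0)
    (hc : chi7 u v w = 0) : ∃ r s t : ℝ, cross7 v w = r • u + s • v + t • w := by
  have comm : ∀ a b, ip7 a b = ip7 b a := fun a b => by simp only [ip7]; ring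
  have hw : ip7 w w ≠ 0 := by
    intro h0
    have := (h 0 0 1 (by simp [ip7_self h0])).2.2
    norm_num at this
  obtain ⟨D, hD⟩ : ∃ D, D = ip7 v v * ip7 w w - ip7 v w * ip7 v w := ⟨_, rfl⟩
  have hD0 : D ≠ 0 := by
    intro h0
    apply hw
    refine (h 0 (ip7 w w) (- ip7 v w) (ip7_self ?_)).2.1
    rw [ip_lin, comm _ u, comm _ v, comm (_ + _) w, ip_lin, ip_lin, ip_lin, comm w v]
    rw [hD] at h0
    linear_combination ip7 w w * h0
  obtain ⟨b, hb⟩ : ∃ b, b = -(ip7 u v * ip7 w w - ip7 u w * ip7 v w) := ⟨_, rfl⟩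
  obtain ⟨c, hcc⟩ : ∃ c, c = -(ip7 u w * ip7 v v - ip7 u v * ip7 v w) := ⟨_, rfl⟩
  obtain ⟨n, hn⟩ : ∃ n, n = D • u + b • v + c • w := ⟨_, rfl⟩
  have hn0 : ip7 n n ≠ 0 := by
    intro h0
    exact hD0 (h D b c (hn ▸ ip7_self h0)).1
  have hu : cross7 u (cross7 v w) = ip7 u w • v - ip7 u v • w := by
    unfold chi7 at hc
    linear_combination (exp := 1) hc
  have hw2 : cross7 w (cross7 v w) = ip7 w w • v - ip7 v w • w := by
    rw [cross_anti v w]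
    have : cross7 w (-cross7 w v) = - cross7 w (cross7 w v) := by
      have := cross_lin (cross7 w v) 0 0 w (-1) 0 0
      simp only [zero_smul, add_zero, neg_smul, one_smul] at this
      rw [cross_anti, this, neg_neg, cross_anti]
    rw [this, cross7_cross7, comm w v]
    abel
  have hz : cross7 n (cross7 v w) = 0 := by
    rw [hn, cross_lin, hu, cross7_cross7, hw2]
    subst hD hb hcc
    module
  have hp := cross7_cross7 n (cross7 v w)
  rw [hz] at hp
  have h00 : cross7 n 0 = 0 := by
    have := cross_lin 0 0 0 n 0 0 0
    simp only [zero_smul, add_zero] at this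
    rw [cross_anti, this, neg_zero]
  rw [h00] at hp
  have hp2 : cross7 v w = ((ip7 n n)⁻¹ * ip7 n (cross7 v w)) • n := by
    have : ip7 n n • cross7 v w = ip7 n (cross7 v w) • n := (sub_eq_zero.mp hp.symm).symm
    rw [mul_smul, ← this, smul_smul, inv_mul_cancel₀ hn0, one_smul]
  generalize (ip7 n n)⁻¹ * ip7 n (cross7 v w) = m at hp2
  refine ⟨m * D, m * b, m * c, ?_⟩
  rw [hp2, hn]
  module

theorem stmt0 (u v w : V7) (h : LinearIndependent ℝ ![u, v, w]) :
    (∀ a ∈ Submodule.span ℝ ({u, v, w} : Set V7),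
      ∀ b ∈ Submodule.span ℝ ({u, v, w} : Set V7),
        cross7 a b ∈ Submodule.span ℝ ({u, v, w} : Set V7))
      ↔ (∀ x : V7, starphi7 u v w x = 0) := by
  have h3 : ∀ r s t : ℝ, r • u + s • v + t • w = 0 → r = 0 ∧ s = 0 ∧ t = 0 := by
    intro r s t hr
    have := Fintype.linearIndependent_iff.mp h ![r, s, t] (by
      simpa [Fin.sum_univ_three] using hr)
    exact ⟨this 0, this 1, this 2⟩
  have hu : u ∈ Submodule.span ℝ ({u, v, w} : Set V7) := Submodule.subset_span (by simp)
  have hv : v ∈ Submodule.span ℝ ({u, v, w} : Set V7) := Submodule.subset_span (by simp)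
  have hw : w ∈ Submodule.span ℝ ({u, v, w} : Set V7) := Submodule.subset_span (by simp)
  constructor
  · intro H
    rw [star_zero_iff]
    have hm : chi7 u v w ∈ Submodule.span ℝ ({u, v, w} : Set V7) :=
      Submodule.sub_mem _ (Submodule.add_mem _ (H _ hu _ (H _ hv _ hw))
        (Submodule.smul_mem _ _ hw)) (Submodule.smul_mem _ _ hv)
    obtain ⟨r, s, t, e⟩ := Submodule.mem_span_triple.mp hm
    apply ip7_self
    nth_rewrite 2 [← e]
    rw [ip_lin, ← star_chi, ← star_chi, ← star_chi, star_1, ← star_cyc u v w v, star_1,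
      ← star_cyc u v w w, ← star_cyc v w u w, star_1]
    ring
  · intro H
    have H2 : ∀ x, starphi7 v w u x = 0 := fun x => by rw [star_cyc, H]
    have H3 : ∀ x, starphi7 w u v x = 0 := fun x => by rw [star_cyc, H2]
    have perm1 : ∀ r s t : ℝ, r • v + s • w + t • u = 0 → r = 0 ∧ s = 0 ∧ t = 0 := by
      intro r s t e
      have := h3 t r s (by rw [← e]; abel)
      tauto
    have perm2 : ∀ r s t : ℝ, r • w + s • u + t • v = 0 → r = 0 ∧ s = 0 ∧ t = 0 := by
      intro r s t e
      have := h3 s t r (by rw [← e]; abel)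
      tauto
    have lc : ∀ {a b c : V7}, a ∈ Submodule.span ℝ ({u, v, w} : Set V7) →
        b ∈ Submodule.span ℝ ({u, v, w} : Set V7) → c ∈ Submodule.span ℝ ({u, v, w} : Set V7) →
        ∀ r s t : ℝ, r • a + s • b + t • c ∈ Submodule.span ℝ ({u, v, w} : Set V7) :=
      fun ha hb hc r s t => Submodule.add_mem _ (Submodule.add_mem _
        (Submodule.smul_mem _ _ ha) (Submodule.smul_mem _ _ hb)) (Submodule.smul_mem _ _ hc)
    have k1 : cross7 v w ∈ Submodule.span ℝ ({u, v, w} : Set V7) := by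
      obtain ⟨r, s, t, e⟩ := key u v w h3 ((star_zero_iff _ _ _).mp H)
      rw [e]; exact lc hu hv hw _ _ _
    have k2 : cross7 w u ∈ Submodule.span ℝ ({u, v, w} : Set V7) := by
      obtain ⟨r, s, t, e⟩ := key v w u perm1 ((star_zero_iff _ _ _).mp H2)
      rw [e]; exact lc hv hw hu _ _ _
    have k3 : cross7 u v ∈ Submodule.span ℝ ({u, v, w} : Set V7) := by
      obtain ⟨r, s, t, e⟩ := key w u v perm2 ((star_zero_iff _ _ _).mp H3)
      rw [e]; exact lc hw hu hv _ _ _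
    have sw : ∀ {a b : V7}, cross7 a b ∈ Submodule.span ℝ ({u, v, w} : Set V7) →
        cross7 b a ∈ Submodule.span ℝ ({u, v, w} : Set V7) := by
      intro a b hab
      rw [cross_anti]
      exact Submodule.neg_mem _ hab
    have sf : ∀ a : V7, cross7 a a ∈ Submodule.span ℝ ({u, v, w} : Set V7) := by
      intro a
      rw [self_eq_neg.mp (cross_anti a a)]
      exact Submodule.zero_mem _
    intro a ha b hb
    obtain ⟨r, s, t, rfl⟩ := Submodule.mem_span_triple.mp ha
    obtain ⟨r2, s2, t2, rfl⟩ := Submodule.mem_span_triple.mp hb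
    rw [cross_lin]
    refine lc (sw ?_) (sw ?_) (sw ?_) _ _ _ <;> rw [cross_lin]
    · exact lc (sf _) (sw k3) k2 _ _ _
    · exact lc k3 (sf _) (sw k1) _ _ _
    · exact lc (sw k2) k1 (sf _) _ _ _
end
end

section
/- Let λ₁, …, λ_p be real numbers. The following are equivalent: (i) Im ∏_{j=1}^{p} (1 + i λ_j s) = 0 for every real s; (ii) every odd-degree elementary symmetric polynomial of λ₁, …, λ_p vanishes, i.e. e_k(λ₁,…,λ_p) = 0 for all odd k; (iii) the multiset {λ₁, …, λ_p} is invariant under negation, i.e. equals the multiset {−λ₁, …, −λ_p} (the λ_j occur in pairs of opposite signs, together with zeros). -/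
theorem aux_expand (p : ℕ) (l : Fin p → ℝ) (s : ℝ) :
    (∏ j, (1 + Complex.I * (l j : ℂ) * (s : ℂ))).im =
      ∑ k ∈ Finset.range (p + 1),
        (Complex.I ^ k).im * (Finset.univ.val.map l).esymm k * s ^ k := by
  rw [Finset.prod_one_add, Finset.sum_powerset, Complex.im_sum, Finset.card_univ, Fintype.card_fin]
  refine Finset.sum_congr rfl fun k _ => ?_
  have h : ∑ t ∈ Finset.powersetCard k (Finset.univ : Finset (Fin p)),
      ∏ i ∈ t, (Complex.I * (l i : ℂ) * (s : ℂ)) =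
      Complex.I ^ k * (((Finset.univ.val.map l).esymm k * s ^ k : ℝ) : ℂ) := by
    rw [Finset.esymm_map_val]
    push_cast
    rw [Finset.sum_mul, Finset.mul_sum]
    refine Finset.sum_congr rfl fun t ht => ?_
    rw [Finset.prod_mul_distrib, Finset.prod_mul_distrib, Finset.prod_const, Finset.prod_const,
      (Finset.mem_powersetCard.mp ht).2]
    ring
  rw [h, Complex.im_mul_ofReal]
  ring

theorem aux_im_even (k : ℕ) (h : Even k) : (Complex.I ^ k).im = 0 := by
  obtain ⟨m, rfl⟩ := h
  rw [← two_mul, pow_mul, Complex.I_sq]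
  rcases neg_one_pow_eq_or ℂ m with h | h <;> simp [h]

theorem aux_im_odd (k : ℕ) (h : Odd k) : (Complex.I ^ k).im ≠ 0 := by
  obtain ⟨m, rfl⟩ := h
  rw [pow_succ, pow_mul, Complex.I_sq]
  rcases neg_one_pow_eq_or ℂ m with h | h <;> simp [h]

open Polynomial in
theorem aux_coeff (n : ℕ) (a : ℕ → ℝ) (h : ∀ s : ℝ, ∑ k ∈ Finset.range n, a k * s ^ k = 0)
    (k : ℕ) (hk : k < n) : a k = 0 := by
  have h0 : (∑ k ∈ Finset.range n, C (a k) * X ^ k : ℝ[X]) = 0 := by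
    apply Polynomial.funext
    intro s
    simpa [eval_finsetSum] using h s
  have := congrArg (fun q => coeff q k) h0
  simpa [finsetSum_coeff, coeff_C_mul, coeff_X_pow, hk] using this

theorem stmt10 (p : ℕ) (l : Fin p → ℝ) :
    ((∀ s : ℝ, (∏ j, (1 + Complex.I * (l j : ℂ) * (s : ℂ))).im = 0) ↔
        (∀ k : ℕ, Odd k → (Finset.univ.val.map l).esymm k = 0)) ∧
      ((∀ k : ℕ, Odd k → (Finset.univ.val.map l).esymm k = 0) ↔
        (Finset.univ.val.map l).map (fun x => -x) = Finset.univ.val.map l) := by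
  constructor
  · simp_rw [aux_expand]
    constructor
    · intro h k hk
      by_cases hkp : k < p + 1
      · have := aux_coeff (p + 1) _ h k hkp
        exact (mul_eq_zero.mp this).resolve_left (aux_im_odd k hk)
      · rw [Multiset.esymm, Multiset.powersetCard_eq_empty]
        · simp
        · simp; omega
    · intro h s
      refine Finset.sum_eq_zero fun k _ => ?_
      rcases Nat.even_or_odd k with hk | hk
      · simp [aux_im_even k hk]
      · rw [h k hk, mul_zero, zero_mul]
  · generalize Finset.univ.val.map l = m
    constructor
    · intro h
      have he : ∀ k, (m.map (fun x => -x)).esymm k = m.esymm k := by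
        intro k
        have := Multiset.esymm_neg m k
        change (m.map Neg.neg).esymm k = _
        rw [this]
        rcases Nat.even_or_odd k with hk | hk
        · simp [hk.neg_one_pow]
        · simp [h k hk]
      rw [← Polynomial.roots_multiset_prod_X_sub_C (m.map (fun x => -x)),
        Multiset.prod_X_sub_X_eq_sum_esymm]
      simp_rw [he, Multiset.card_map]
      rw [← Multiset.prod_X_sub_X_eq_sum_esymm, Polynomial.roots_multiset_prod_X_sub_C]
    · intro h k hk
      have := Multiset.esymm_neg m k
      change (m.map (fun x => -x)).esymm k = _ at this
      rw [h, hk.neg_one_pow] at this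
      linarith
end

section
/- Let n > p ≥ 1, let a, b ∈ ℝ, t > 0, and let S be a symmetric real p×p matrix. In ℂⁿ⁺¹ with standard basis e₀, …, e_n define E_j = cosh(t)·e_j + i·sinh(t)·Σ_{k=1}^{p} S_{jk} e_k for 1 ≤ j ≤ p, F_{p+1} = sinh(t)·e₀ + i·cosh(t)·e_{p+1}, and F_k = i·(sinh(t)/t)·e_k for p+2 ≤ k ≤ n. Let ω be the real alternating 2-form on ℂⁿ⁺¹ given by ω(u,v) = a·Σ_{k=1}^{n} Im(ū_k v_k) + b·Im(ū_{p+1} v_{p+1}). Then ω vanishes identically on the n-dimensional real span of {E₁, …, E_p, F_{p+1}, …, F_n}; i.e. this subspace is Lagrangian for ω. (This is the computation showing the conormal bundle of any submanifold of Sⁿ is Lagrangian for the Kähler form of the Stenzel metric.) -/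
/-!
STATEMENT 11: the Lagrangian condition for the conormal bundle construction in
the Stenzel metric.  With E_j = cosh t·e_j + i sinh t·Σₖ S_{jk} e_k (1 ≤ j ≤ p),
F_{p+1} = sinh t·e₀ + i cosh t·e_{p+1}, F_k = i (sinh t / t)·e_k (p+2 ≤ k ≤ n),
and ω(u,v) = a·Σ_{k=1}^n Im(ūₖ vₖ) + b·Im(ū_{p+1} v_{p+1}), the 2-form ω
vanishes identically on the real span of {E₁,…,E_p,F_{p+1},…,F_n}.
-/

noncomputable section

theorem stmt11 (n p : ℕ) (hp : 1 ≤ p) (hpn : p < n)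
    (a b t : ℝ) (ht : 0 < t)
    (S : Matrix (Fin p) (Fin p) ℝ) (hS : S.IsSymm)
    (E : Fin p → (Fin (n + 1) → ℂ))
    (hE : ∀ j : Fin p, E j = fun m : Fin (n + 1) =>
      (if (m : ℕ) = (j : ℕ) + 1 then (Real.cosh t : ℂ) else 0)
        + Complex.I * (Real.sinh t : ℂ) *
            ∑ k : Fin p, (if (m : ℕ) = (k : ℕ) + 1 then (S j k : ℂ) else 0))
    (Fp1 : Fin (n + 1) → ℂ)
    (hFp1 : Fp1 = fun m : Fin (n + 1) =>
      (if (m : ℕ) = 0 then (Real.sinh t : ℂ) else 0)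
        + Complex.I * (Real.cosh t : ℂ) * (if (m : ℕ) = p + 1 then 1 else 0))
    (F : Fin (n + 1) → (Fin (n + 1) → ℂ))
    (hF : ∀ k : Fin (n + 1), F k = fun m : Fin (n + 1) =>
      Complex.I * ((Real.sinh t / t : ℝ) : ℂ) * (if m = k then 1 else 0))
    (ω : (Fin (n + 1) → ℂ) → (Fin (n + 1) → ℂ) → ℝ)
    (hω : ∀ x y, ω x y =
      a * ∑ k : Fin n, ((starRingEnd ℂ) (x k.succ) * y k.succ).im
        + b * ((starRingEnd ℂ) (x ⟨p + 1, by omega⟩) * y ⟨p + 1, by omega⟩).im) :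
    ∀ x ∈ Submodule.span ℝ
        (Set.range E ∪ {Fp1} ∪ {w | ∃ k : Fin (n + 1), p + 2 ≤ (k : ℕ) ∧ w = F k}),
      ∀ y ∈ Submodule.span ℝ
        (Set.range E ∪ {Fp1} ∪ {w | ∃ k : Fin (n + 1), p + 2 ≤ (k : ℕ) ∧ w = F k}),
        ω x y = 0 := by
  have hEre : ∀ j m, (E j m).re = if (m : ℕ) = (j : ℕ) + 1 then Real.cosh t else 0 := by
    intro j m
    have h : ∑ k : Fin p, (if (m : ℕ) = (k : ℕ) + 1 then (S j k : ℂ) else 0)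
        = ((∑ k : Fin p, (if (m : ℕ) = (k : ℕ) + 1 then S j k else 0) : ℝ) : ℂ) := by
      push_cast
      exact Finset.sum_congr rfl fun k _ => by split_ifs <;> simp
    rw [hE]
    simp only [h]
    generalize (∑ k : Fin p, (if (m : ℕ) = (k : ℕ) + 1 then S j k else 0) : ℝ) = r
    generalize Real.cosh t = c
    generalize Real.sinh t = s
    split_ifs <;> simp
  have hEim : ∀ j m, (E j m).im = Real.sinh t *
      ∑ k : Fin p, (if (m : ℕ) = (k : ℕ) + 1 then S j k else 0) := by
    intro j m
    have h : ∑ k : Fin p, (if (m : ℕ) = (k : ℕ) + 1 then (S j k : ℂ) else 0)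
        = ((∑ k : Fin p, (if (m : ℕ) = (k : ℕ) + 1 then S j k else 0) : ℝ) : ℂ) := by
      push_cast
      exact Finset.sum_congr rfl fun k _ => by split_ifs <;> simp
    rw [hE]
    simp only [h]
    generalize (∑ k : Fin p, (if (m : ℕ) = (k : ℕ) + 1 then S j k else 0) : ℝ) = r
    generalize Real.cosh t = c
    generalize Real.sinh t = s
    split_ifs <;> simp
  have hEim0 : ∀ j (m : Fin (n + 1)), p + 1 ≤ (m : ℕ) → (E j m).im = 0 := by
    intro j m hm
    rw [hEim, Finset.sum_eq_zero, mul_zero]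
    intro k _
    rw [if_neg (by have := k.2; omega)]
  have hEre0 : ∀ j (m : Fin (n + 1)), p + 1 ≤ (m : ℕ) → (E j m).re = 0 := by
    intro j m hm
    rw [hEre, if_neg (by have := j.2; omega)]
  -- the key symmetric computation
  have hkey : ∀ i j : Fin p, ∑ k : Fin n, (E i k.succ).re * (E j k.succ).im
      = Real.cosh t * Real.sinh t * S j i := by
    intro i j
    rw [Finset.sum_eq_single (⟨i, by have := i.2; omega⟩ : Fin n)]
    · rw [hEre, hEim, Finset.sum_eq_single i]
      · simp
        ring
      · intro k _ hk
        rw [if_neg]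
        intro h
        apply hk
        ext
        simp at h
        omega
      · simp
    · intro k _ hk
      rw [hEre, if_neg, zero_mul]
      intro h
      apply hk
      ext
      simpa using h
    · simp
  -- the other generators
  have hG : ∀ w, w = Fp1 ∨ (∃ k : Fin (n + 1), p + 2 ≤ (k : ℕ) ∧ w = F k) →
      ∀ k : Fin n, (w k.succ).re = 0 ∧ ((k.succ : ℕ) ≤ p → (w k.succ).im = 0) := by
    generalize Real.cosh t = c at *
    generalize Real.sinh t = s at *
    rintro w (rfl | ⟨l, hl, rfl⟩) k
    · rw [hFp1]
      constructor
      · simp only [Fin.val_succ]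
        split_ifs <;> simp_all
      · intro h
        simp only [Fin.val_succ] at h ⊢
        rw [if_neg (by omega), if_neg (by omega)]
        simp
    · rw [hF]
      constructor
      · generalize s / t = r
        simp only []
        split_ifs <;> simp
      · intro h
        simp only []
        rw [if_neg (by rintro rfl; omega)]
        simp
  have hω' : ∀ x y, ω x y =
      a * ∑ k : Fin n, ((x k.succ).re * (y k.succ).im - (x k.succ).im * (y k.succ).re)
        + b * ((x (Fin.succ ⟨p, hpn⟩)).re * (y (Fin.succ ⟨p, hpn⟩)).im
          - (x (Fin.succ ⟨p, hpn⟩)).im * (y (Fin.succ ⟨p, hpn⟩)).re) := by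
    intro x y
    rw [hω]
    simp only [Complex.mul_im, Complex.conj_re, Complex.conj_im, neg_mul, ← sub_eq_add_neg,
      Fin.succ_mk]
  have hEG : ∀ i w, (w = Fp1 ∨ (∃ k : Fin (n + 1), p + 2 ≤ (k : ℕ) ∧ w = F k)) →
      ∀ k : Fin n, (E i k.succ).re * (w k.succ).im = 0 := by
    intro i w hw k
    by_cases h : (k.succ : ℕ) ≤ p
    · rw [(hG w hw k).2 h, mul_zero]
    · rw [hEre0 i _ (by omega), zero_mul]
  have hanti : ∀ x y, ω x y = - ω y x := by
    intro x y
    have : ∀ k : Fin n, (x k.succ).re * (y k.succ).im - (x k.succ).im * (y k.succ).re =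
      -((y k.succ).re * (x k.succ).im - (y k.succ).im * (x k.succ).re) := fun k => by ring
    rw [hω', hω']
    simp only [this, Finset.sum_neg_distrib]
    ring
  have hadd : ∀ x y z, ω (x + y) z = ω x z + ω y z := by
    intro x y z
    simp only [hω', Pi.add_apply, Complex.add_re, Complex.add_im]
    have : ∀ k : Fin n, ((x k.succ).re + (y k.succ).re) * (z k.succ).im
        - ((x k.succ).im + (y k.succ).im) * (z k.succ).re
      = ((x k.succ).re * (z k.succ).im - (x k.succ).im * (z k.succ).re)
       + ((y k.succ).re * (z k.succ).im - (y k.succ).im * (z k.succ).re) := fun k => by ring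
    simp only [this, Finset.sum_add_distrib]
    ring
  have hsmul : ∀ (r : ℝ) x z, ω (r • x) z = r * ω x z := by
    intro r x z
    simp only [hω', Pi.smul_apply, Complex.smul_re, Complex.smul_im, smul_eq_mul]
    have : ∀ k : Fin n, r * (x k.succ).re * (z k.succ).im
        - r * (x k.succ).im * (z k.succ).re
      = r * ((x k.succ).re * (z k.succ).im - (x k.succ).im * (z k.succ).re) :=
        fun k => by ring
    simp only [this, ← Finset.mul_sum]
    ring
  have hzero : ∀ z, ω 0 z = 0 := by
    intro z
    simpa using hsmul 0 0 z
  have hgen : ∀ x ∈ (Set.range E ∪ {Fp1} ∪ {w | ∃ k : Fin (n + 1), p + 2 ≤ (k : ℕ) ∧ w = F k}),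
      ∀ y ∈ (Set.range E ∪ {Fp1} ∪ {w | ∃ k : Fin (n + 1), p + 2 ≤ (k : ℕ) ∧ w = F k}),
      ω x y = 0 := by
    have hEG0 : ∀ i w, (w = Fp1 ∨ (∃ k : Fin (n + 1), p + 2 ≤ (k : ℕ) ∧ w = F k)) →
        ω (E i) w = 0 := by
      intro i w hw
      rw [hω']
      simp only [hEG i w hw, (hG w hw _).1]
      simp
    intro x hx y hy
    simp only [Set.union_assoc] at hx hy
    rcases hx with ⟨i, rfl⟩ | hx <;> rcases hy with ⟨j, rfl⟩ | hy
    · rw [hω', Finset.sum_sub_distrib, hkey]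
      have : ∑ k : Fin n, (E i k.succ).im * (E j k.succ).re
          = Real.cosh t * Real.sinh t * S i j := by
        rw [← hkey]
        exact Finset.sum_congr rfl fun k _ => mul_comm _ _
      rw [this, hS.apply i j, hEre0 i _ (by simp), hEre0 j _ (by simp)]
      ring
    · exact hEG0 i y hy
    · rw [hanti, hEG0 j x hx, neg_zero]
    · rw [hω']
      simp only [(hG x hx _).1, (hG y hy _).1]
      simp
  intro x hx y hy
  induction hx using Submodule.span_induction with
  | zero => exact hzero y
  | add u v _ _ hu hv => rw [hadd, hu, hv, add_zero]
  | smul r u _ hu => rw [hsmul, hu, mul_zero]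
  | mem u hu =>
    rw [hanti, neg_eq_zero]
    induction hy using Submodule.span_induction with
    | zero => exact hzero u
    | add v w _ _ hv hw => rw [hadd, hv, hw, add_zero]
    | smul r v _ hv => rw [hsmul, hv, mul_zero]
    | mem v hv => exact hgen v hv u hu
end
end

section
/- Let n > p ≥ 1, let λ₁, …, λ_p ∈ ℝ and t > 0. In ℂⁿ⁺¹ with standard basis e₀, …, e_n define z = cosh(t)·e₀ + i·sinh(t)·e_{p+1}, E_j = (cosh(t) + i λ_j sinh(t))·e_j for 1 ≤ j ≤ p, F_{p+1} = sinh(t)·e₀ + i·cosh(t)·e_{p+1}, and F_k = i·(sinh(t)/t)·e_k for p+2 ≤ k ≤ n. Then the determinant of the (n+1)×(n+1) complex matrix whose rows are z, E₁, …, E_p, F_{p+1}, …, F_n equals i^{n−p} · (sinh(t)/t)^{n−p−1} · ∏_{j=1}^{p} (cosh(t) + i λ_j sinh(t)). In particular, its product with i^{p−n} has vanishing imaginary part for all t > 0 if and only if Im ∏_{j=1}^{p}(1 + i λ_j tanh(t)) = 0 for all t > 0. -/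
/-!
STATEMENT 12: the evaluation of the holomorphic volume form of the quadric on
the tangent space of the conormal bundle.  The matrix M(t) has rows
z = cosh t·e₀ + i sinh t·e_{p+1}, E_j = (cosh t + i λⱼ sinh t)·e_j (1 ≤ j ≤ p),
F_{p+1} = sinh t·e₀ + i cosh t·e_{p+1}, and F_k = i (sinh t / t)·e_k
(p+2 ≤ k ≤ n).  Its determinant is
i^{n−p} (sinh t / t)^{n−p−1} ∏ⱼ (cosh t + i λⱼ sinh t); in particular
Im(i^{p−n}·det M(t)) = 0 for all t > 0 iff
Im ∏ⱼ (1 + i λⱼ tanh t) = 0 for all t > 0.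
-/

noncomputable section

theorem stmt12 (n p : ℕ) (hp : 1 ≤ p) (hpn : p < n) (l : Fin p → ℝ)
    (M : ℝ → Matrix (Fin (n + 1)) (Fin (n + 1)) ℂ)
    (hM : ∀ t : ℝ, M t = Matrix.of fun i j : Fin (n + 1) =>
      if (i : ℕ) = 0 then
        (if (j : ℕ) = 0 then (Real.cosh t : ℂ)
          else if (j : ℕ) = p + 1 then Complex.I * (Real.sinh t : ℂ) else 0)
      else if hi : (i : ℕ) ≤ p then
        (if (j : ℕ) = (i : ℕ) then
          (Real.cosh t : ℂ) + Complex.I * (l ⟨(i : ℕ) - 1, by omega⟩ : ℂ) * (Real.sinh t : ℂ)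
         else 0)
      else if (i : ℕ) = p + 1 then
        (if (j : ℕ) = 0 then (Real.sinh t : ℂ)
          else if (j : ℕ) = p + 1 then Complex.I * (Real.cosh t : ℂ) else 0)
      else (if j = i then Complex.I * ((Real.sinh t / t : ℝ) : ℂ) else 0)) :
    (∀ t : ℝ, 0 < t →
      (M t).det = Complex.I ^ (n - p) * ((Real.sinh t / t : ℝ) : ℂ) ^ (n - p - 1)
        * ∏ j, ((Real.cosh t : ℂ) + Complex.I * (l j : ℂ) * (Real.sinh t : ℂ)))
    ∧ ((∀ t : ℝ, 0 < t → (Complex.I ^ ((p : ℤ) - (n : ℤ)) * (M t).det).im = 0)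
        ↔ (∀ t : ℝ, 0 < t →
            (∏ j, (1 + Complex.I * (l j : ℂ) * (Real.tanh t : ℂ))).im = 0)) := by
  have hdet : ∀ t : ℝ, 0 < t →
      (M t).det = Complex.I ^ (n - p) * ((Real.sinh t / t : ℝ) : ℂ) ^ (n - p - 1)
        * ∏ j, ((Real.cosh t : ℂ) + Complex.I * (l j : ℂ) * (Real.sinh t : ℂ)) := by
    intro t ht
    obtain ⟨m, rfl⟩ : ∃ m, n = p + 1 + m := ⟨n - (p + 1), by omega⟩
    have hc : (Real.cosh t : ℂ) ≠ 0 := by exact_mod_cast (Real.cosh_pos t).ne'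
    have hcs : (Real.cosh t : ℂ) ^ 2 - (Real.sinh t : ℂ) ^ 2 = 1 := by
      exact_mod_cast Real.cosh_sq_sub_sinh_sq t
    have hM' := hM t
    generalize (Real.cosh t : ℂ) = c at *
    generalize (Real.sinh t : ℂ) = s at *
    generalize ((Real.sinh t / t : ℝ) : ℂ) = r at *
    generalize M t = A at *
    let q : Fin (p + 1 + m + 1) := ⟨p + 1, by omega⟩
    have hq : (q : ℕ) = p + 1 := rfl
    have hq0 : q ≠ 0 := by
      intro h
      have := congrArg Fin.val h
      simp [hq] at this
    rw [← Matrix.det_updateRow_add_smul_self A hq0 (-(s / c))]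
    rw [Matrix.det_of_isUpperTriangular]
    · let d : ℕ → ℂ := fun k => if k = 0 then c else
        if h : k - 1 < p then c + Complex.I * (l ⟨k - 1, h⟩ : ℂ) * s
        else if k = p + 1 then Complex.I / c else Complex.I * r
      have hd : ∀ i : Fin (p + 1 + m + 1),
          (A.updateRow q (A q + (-(s / c)) • A 0)) i i = d i := by
        intro i
        by_cases hi : i = q
        · subst hi
          simp [-Fin.val_eq_zero_iff, hM', hq, d]
          field_simp
          linear_combination hcs
        · have hi' : (i : ℕ) ≠ p + 1 := fun h => hi (Fin.ext h)
          rw [Matrix.updateRow_ne hi, hM']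
          by_cases h0 : (i : ℕ) = 0
          · simp [-Fin.val_eq_zero_iff, h0, d]
          · by_cases h1 : (i : ℕ) ≤ p
            · have h2 : (i : ℕ) - 1 < p := by omega
              simp [-Fin.val_eq_zero_iff, h0, h1, h2, d]
            · have h2 : ¬ (i : ℕ) - 1 < p := by omega
              simp [-Fin.val_eq_zero_iff, h0, h1, h2, hi', d]
      rw [Finset.prod_congr rfl (fun i _ => hd i), Fin.prod_univ_eq_prod_range,
        Finset.prod_range_succ', Finset.prod_range_add, Finset.prod_range_succ,
        ← Fin.prod_univ_eq_prod_range]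
      have e1 : ∏ i : Fin p, d (i + 1) = ∏ j, (c + Complex.I * (l j : ℂ) * s) := by
        refine Finset.prod_congr rfl fun i _ => ?_
        simp [d]
      have e2 : d (p + 1) = Complex.I / c := by simp [d]
      have e3 : ∏ x ∈ Finset.range m, d (p + 1 + x + 1) = (Complex.I * r) ^ m := by
        rw [Finset.prod_congr rfl (g := fun _ => Complex.I * r)]
        · simp
        · intro x _
          have : ¬ (p + 1 + x < p) := by omega
          simp [d, this]
          intro h; omega
      have e4 : d 0 = c := by simp [d]
      rw [e1, e2, e3, e4, show p + 1 + m - p = m + 1 by omega, Nat.add_sub_cancel]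
      generalize ∏ j, (c + Complex.I * (l j : ℂ) * s) = P
      field_simp
      ring
    · intro i j hij
      have hij' : (j : ℕ) < i := hij
      by_cases hi : i = q
      · subst hi
        by_cases h0 : (j : ℕ) = 0
        · simp [-Fin.val_eq_zero_iff, hM', hq, h0, hc]
        · have : (j : ℕ) ≠ p + 1 := by omega
          simp [-Fin.val_eq_zero_iff, hM', hq, this, h0]
      · have hi' : (i : ℕ) ≠ p + 1 := fun h => hi (Fin.ext h)
        have h0 : (i : ℕ) ≠ 0 := by omega
        have h1 : (j : ℕ) ≠ i := by omega
        have h2 : j ≠ i := fun h => h1 (congrArg Fin.val h)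
        rw [Matrix.updateRow_ne hi, hM']
        simp [-Fin.val_eq_zero_iff, hi', h0, h1, h2]
  refine ⟨hdet, ?_⟩
  have key : ∀ t : ℝ, 0 < t → ((Complex.I ^ ((p : ℤ) - (n : ℤ)) * (M t).det).im = 0 ↔
      (∏ j, (1 + Complex.I * (l j : ℂ) * (Real.tanh t : ℂ))).im = 0) := by
    intro t ht
    have hc := (Real.cosh_pos t).ne'
    have hc' : (Real.cosh t : ℂ) ≠ 0 := by exact_mod_cast hc
    have hs : Real.sinh t / t ≠ 0 := (div_pos (Real.sinh_pos_iff.2 ht) ht).ne'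
    have e1 : ∏ j, ((Real.cosh t : ℂ) + Complex.I * (l j : ℂ) * (Real.sinh t : ℂ))
        = (Real.cosh t : ℂ) ^ p * ∏ j, (1 + Complex.I * (l j : ℂ) * (Real.tanh t : ℂ)) := by
      have : (Real.cosh t : ℂ) ^ p = ∏ _j : Fin p, (Real.cosh t : ℂ) := by simp
      rw [this, ← Finset.prod_mul_distrib]
      refine Finset.prod_congr rfl fun j _ => ?_
      rw [Real.tanh_eq_sinh_div_cosh, Complex.ofReal_div]
      field_simp
    have e2 : Complex.I ^ ((p : ℤ) - (n : ℤ)) * Complex.I ^ (n - p) = 1 := by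
      rw [← zpow_natCast, ← zpow_add₀ Complex.I_ne_zero, Nat.cast_sub hpn.le]
      simp
    have e3 : Complex.I ^ ((p : ℤ) - (n : ℤ)) * (M t).det
        = (((Real.sinh t / t) ^ (n - p - 1) * Real.cosh t ^ p : ℝ) : ℂ)
          * ∏ j, (1 + Complex.I * (l j : ℂ) * (Real.tanh t : ℂ)) := by
      rw [hdet t ht, e1, Complex.ofReal_mul, Complex.ofReal_pow, Complex.ofReal_pow,
        mul_assoc (Complex.I ^ (n - p)), ← mul_assoc, e2, one_mul, mul_assoc]
    rw [e3, Complex.im_ofReal_mul, mul_eq_zero, or_iff_right (mul_ne_zero (pow_ne_zero _ hs) (pow_ne_zero _ hc))]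
  exact forall_congr' fun t => forall_congr' fun ht => key t ht
end
end

section
/- Fix u, v > 0 and real numbers A¹₁₁, A¹₁₂, A¹₂₂, A²₁₁, A²₁₂, A²₂₂. In ℝ⁷ with standard basis e₀, e₁, e₂, e₃, f₁, f₂, f₃, for t₁ ∈ ℝ define E₁ = e₀ + t₁[(−A¹₁₁ − A²₁₂) f₃ + (−A¹₁₂ + A²₁₁) f₂], E₂ = e₁ + t₁[(−A¹₁₂ − A²₂₂) f₃ + (−A¹₂₂ + A²₁₂) f₂], and F₁ = f₁. Then the 3-dimensional subspace span_ℝ{E₁, E₂, F₁} is closed under the cross product ×_{u,v} for every t₁ ∈ ℝ if and only if A¹₁₁ + A¹₂₂ = 0 and A²₁₁ + A²₂₂ = 0. (This is the pointwise linear-algebra content of the theorem that the line bundle L = span(vol_Σ − ∗vol_Σ) over a surface Σ ⊂ X⁴ is associative in Λ²₋(T*X⁴) with the Bryant–Salamon G₂ metric if and only if Σ is minimal.) -/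
/-!
STATEMENT 13: the pointwise linear-algebra content of: the line bundle
L = span(vol_Σ − ∗vol_Σ) over a surface Σ ⊂ X⁴ is associative in Λ²₋(T*X⁴)
with the Bryant–Salamon G₂ metric iff Σ is minimal.
-/

noncomputable section

/-- The Bryant–Salamon G₂ 3-form
φ_{u,v} = v³ f¹∧f²∧f³ + u²v [f¹∧(e⁰∧e¹ − e²∧e³) + f²∧(e⁰∧e² − e³∧e¹)
          + f³∧(e⁰∧e³ − e¹∧e²)]. -/
def phiBS (u v : ℝ) (a b c : V7) : ℝ :=
  v ^ 3 * form3 4 5 6 a b c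
    + u ^ 2 * v * (form3 4 0 1 a b c - form3 4 2 3 a b c
        + form3 5 0 2 a b c - form3 5 3 1 a b c
        + form3 6 0 3 a b c - form3 6 1 2 a b c)

/-- The cross product ×_{u,v} determined by
g_{u,v}(a ×_{u,v} b, z) = φ_{u,v}(a,b,z), where
g_{u,v} = u²(dx₀²+dx₁²+dx₂²+dx₃²) + v²(dy₁²+dy₂²+dy₃²). -/
def crossBS (u v : ℝ) (a b : V7) : V7 :=
  fun k => phiBS u v a b (e7 k) / (if (k : ℕ) < 4 then u ^ 2 else v ^ 2)

theorem stmt13 (u v : ℝ) (hu : 0 < u) (hv : 0 < v)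
    (A111 A112 A122 A211 A212 A222 : ℝ) :
    (∀ t1 : ℝ, ∀ S : Submodule ℝ V7,
      S = Submodule.span ℝ
        ({e7 0 + t1 • ((-A111 - A212) • e7 6 + (-A112 + A211) • e7 5),
          e7 1 + t1 • ((-A112 - A222) • e7 6 + (-A122 + A212) • e7 5),
          e7 4} : Set V7) →
      ∀ a ∈ S, ∀ b ∈ S, crossBS u v a b ∈ S)
    ↔ (A111 + A122 = 0 ∧ A211 + A222 = 0) := by
  have key : ∀ (E F G w : V7), w ∈ Submodule.span ℝ ({E, F, G} : Set V7) ↔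
      ∃ x y z : ℝ, x • E + y • F + z • G = w := by
    intro E F G w
    exact Submodule.mem_span_triple
  constructor
  · intro h
    have h1 := h 1 _ rfl (e7 4) (Submodule.subset_span (by simp))
      (e7 0 + (1:ℝ) • ((-A111 - A212) • e7 6 + (-A112 + A211) • e7 5))
      (Submodule.subset_span (by simp))
    rw [key] at h1
    obtain ⟨x, y, z, hw⟩ := h1
    have c0 := congrFun hw 0
    have c1 := congrFun hw 1
    have c5 := congrFun hw 5
    have c6 := congrFun hw 6
    simp [crossBS, phiBS, form3, e7, Matrix.det_fin_three] at c0 c1 c5 c6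
    field_simp at c1 c5 c6
    subst c0 c1
    constructor
    · apply mul_left_cancel₀ hv.ne'
      linear_combination -c5
    · apply mul_left_cancel₀ hv.ne'
      linear_combination -c6
  · rintro ⟨h1, h2⟩ t S rfl a ha b hb
    obtain rfl : A122 = -A111 := by linarith
    obtain rfl : A222 = -A211 := by linarith
    rw [key] at ha hb ⊢
    obtain ⟨x, y, z, rfl⟩ := ha
    obtain ⟨x', y', z', rfl⟩ := hb
    refine ⟨v * (y * z' - z * y'), v * (z * x' - x * z'),
      (x * y' - y * x') * (u ^ 2 / v + v * t ^ 2 * ((-A112 + A211) ^ 2 + (-A111 - A212) ^ 2)), ?_⟩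
    funext k
    fin_cases k <;>
      simp [crossBS, phiBS, form3, e7, Matrix.det_fin_three] <;> field_simp <;> ring
end
end

section
/- Fix u, v > 0 and real numbers A¹₁₁, A¹₁₂, A¹₂₂, A²₁₁, A²₁₂, A²₂₂. In ℝ⁷ with standard basis e₀, e₁, e₂, e₃, f₁, f₂, f₃, for (t₂, t₃) ∈ ℝ² set A^ν_{jk} = t₂ A¹_{jk} + t₃ A²_{jk} and A^{ν⊥}_{jk} = −t₃ A¹_{jk} + t₂ A²_{jk}, and define E₁ = e₀ + (A^ν₁₂ − A^{ν⊥}₁₁) f₁, E₂ = e₁ + (A^ν₂₂ − A^{ν⊥}₁₂) f₁, F₂ = f₂, F₃ = f₃. Then φ_{u,v}(a,b,c) = 0 for all a, b, c ∈ span_ℝ{E₁, E₂, F₂, F₃} for every (t₂,t₃) ∈ ℝ² if and only if A¹₁₂ = A²₁₁, A²₁₂ = −A¹₁₁, A¹₂₂ = A²₁₂, and A²₂₂ = −A¹₁₂. (This is the pointwise linear-algebra content of the theorem that the rank-2 bundle L^⊥ over a surface Σ ⊂ X⁴ is coassociative in Λ²₋(T*X⁴) with the Bryant–Salamon G₂ metric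 if and only if Σ is a properly oriented real isotropic (superminimal) surface.) -/
/-!
STATEMENT 14: the pointwise linear-algebra content of: the rank-2 bundle L⊥
over a surface Σ ⊂ X⁴ is coassociative in Λ²₋(T*X⁴) with the Bryant–Salamon
G₂ metric iff Σ is properly oriented real isotropic (superminimal).  With
A^ν = t₂A¹ + t₃A², A^{ν⊥} = −t₃A¹ + t₂A², E₁ = e₀ + (A^ν₁₂ − A^{ν⊥}₁₁) f₁,
E₂ = e₁ + (A^ν₂₂ − A^{ν⊥}₁₂) f₁, F₂ = f₂, F₃ = f₃: φ_{u,v} vanishes on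
span{E₁,E₂,F₂,F₃} for all (t₂,t₃) iff A¹₁₂ = A²₁₁, A²₁₂ = −A¹₁₁,
A¹₂₂ = A²₁₂ and A²₂₂ = −A¹₁₂.
-/

noncomputable section

theorem stmt14 (u v : ℝ) (hu : 0 < u) (hv : 0 < v)
    (A111 A112 A122 A211 A212 A222 : ℝ) :
    (∀ t2 t3 : ℝ, ∀ S : Submodule ℝ V7,
      S = Submodule.span ℝ
        ({e7 0 + ((t2 * A112 + t3 * A212) - (-t3 * A111 + t2 * A211)) • e7 4,
          e7 1 + ((t2 * A122 + t3 * A222) - (-t3 * A112 + t2 * A212)) • e7 4,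
          e7 5, e7 6} : Set V7) →
      ∀ a ∈ S, ∀ b ∈ S, ∀ c ∈ S, phiBS u v a b c = 0)
    ↔ (A112 = A211 ∧ A212 = -A111 ∧ A122 = A212 ∧ A222 = -A112) := by
  constructor
  · intro h
    have key : ∀ t2 t3 : ℝ,
        (t2 * A112 + t3 * A212) - (-t3 * A111 + t2 * A211) = 0 ∧
        (t2 * A122 + t3 * A222) - (-t3 * A112 + t2 * A212) = 0 := by
      intro t2 t3
      have hS := h t2 t3 _ rfl
      have h1 := hS _ (Submodule.subset_span (Or.inl rfl))
        _ (Submodule.subset_span (Or.inr (Or.inr (Or.inl rfl))))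
        _ (Submodule.subset_span (Or.inr (Or.inr (Or.inr rfl))))
      have h2 := hS _ (Submodule.subset_span (Or.inr (Or.inl rfl)))
        _ (Submodule.subset_span (Or.inr (Or.inr (Or.inl rfl))))
        _ (Submodule.subset_span (Or.inr (Or.inr (Or.inr rfl))))
      generalize (t2 * A112 + t3 * A212) - (-t3 * A111 + t2 * A211) = x at *
      generalize (t2 * A122 + t3 * A222) - (-t3 * A112 + t2 * A212) = y at *
      simp [phiBS, form3, e7, Matrix.det_fin_three, hv.ne'] at h1 h2
      exact ⟨h1, h2⟩
    have k1 := key 1 0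
    have k2 := key 0 1
    refine ⟨?_, ?_, ?_, ?_⟩ <;> linarith [k1.1, k1.2, k2.1, k2.2]
  · rintro ⟨h1, h2, h3, h4⟩ t2 t3 S rfl
    have key : ∀ a ∈ Submodule.span ℝ
        ({e7 0 + ((t2 * A112 + t3 * A212) - (-t3 * A111 + t2 * A211)) • e7 4,
          e7 1 + ((t2 * A122 + t3 * A222) - (-t3 * A112 + t2 * A212)) • e7 4,
          e7 5, e7 6} : Set V7), a 2 = 0 ∧ a 3 = 0 ∧ a 4 = 0 := by
      have z1 : (t2 * A112 + t3 * A212) - (-t3 * A111 + t2 * A211) = 0 := by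
        rw [h2, h1]; ring
      have z2 : (t2 * A122 + t3 * A222) - (-t3 * A112 + t2 * A212) = 0 := by
        rw [h4, h3]; ring
      rw [z1, z2]
      intro a ha
      induction ha using Submodule.span_induction with
      | mem x hx =>
        simp only [Set.mem_insert_iff, Set.mem_singleton_iff] at hx
        rcases hx with rfl | rfl | rfl | rfl <;> simp [e7]
      | zero => simp
      | add x y _ _ hx hy => simp [hx, hy]
      | smul r x _ hx => simp [hx]
    intro a ha b hb c hc
    obtain ⟨a2, a3, a4⟩ := key a ha
    obtain ⟨b2, b3, b4⟩ := key b hb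
    obtain ⟨c2, c3, c4⟩ := key c hc
    simp [phiBS, form3, Matrix.det_fin_three, a2, a3, a4, b2, b3, b4, c2, c3, c4]
end
end

section
/- Let V and W be 3-dimensional subspaces of ℝ⁷, each closed under the cross product (a × b ∈ V for all a, b ∈ V, and likewise for W). Then dim(V ∩ W) ≠ 2. Consequently two associative 3-planes intersect in dimension 0, 1, or 3. -/
/-!
STATEMENT 0: For linearly independent u, v, w ∈ ℝ⁷, the subspace
V = span{u,v,w} is closed under the G₂ cross product iff the 1-form
x ↦ (∗φ)(u,v,w,x) vanishes identically.
-/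

noncomputable section

def dot7 (a b : V7) : ℝ :=
  a 0 * b 0 + a 1 * b 1 + a 2 * b 2 + a 3 * b 3 + a 4 * b 4 + a 5 * b 5 + a 6 * b 6

theorem dot7_comb (s t : ℝ) (a b c : V7) :
    dot7 (s • a + t • b) c = s * dot7 a c + t * dot7 b c := by
  simp only [dot7, Pi.add_apply, Pi.smul_apply, smul_eq_mul]
  ring

theorem dot7_comm (a b : V7) : dot7 a b = dot7 b a := by
  simp only [dot7]
  ring

theorem dot7_self {a : V7} (h : dot7 a a = 0) : a = 0 := by
  have h' : a 0 ^ 2 + a 1 ^ 2 + a 2 ^ 2 + a 3 ^ 2 + a 4 ^ 2 + a 5 ^ 2 + a 6 ^ 2 = 0 := by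
    rw [← h, dot7]
    ring
  funext k
  have hk : a k ^ 2 = 0 := by
    apply le_antisymm _ (sq_nonneg _)
    have := sq_nonneg (a 0)
    have := sq_nonneg (a 1)
    have := sq_nonneg (a 2)
    have := sq_nonneg (a 3)
    have := sq_nonneg (a 4)
    have := sq_nonneg (a 5)
    have := sq_nonneg (a 6)
    fin_cases k <;> simp only [Fin.reduceFinMk, Fin.zero_eta, Fin.mk_one] <;> linarith
  simpa using hk

theorem cross_coords (a b : V7) : cross7 a b = ![
    b 4 * a 1 - a 4 * b 1 + (b 5 * a 2 - a 5 * b 2) + (b 6 * a 3 - a 6 * b 3),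
    a 4 * b 0 - b 4 * a 0 - (a 5 * b 3 - b 5 * a 3) + (a 6 * b 2 - b 6 * a 2),
    a 5 * b 0 - b 5 * a 0 + (a 4 * b 3 - b 4 * a 3) - (a 6 * b 1 - b 6 * a 1),
    a 6 * b 0 - b 6 * a 0 - (a 4 * b 2 - b 4 * a 2) + (a 5 * b 1 - b 5 * a 1),
    a 5 * b 6 - a 6 * b 5 + (a 0 * b 1 - a 1 * b 0) - (a 2 * b 3 - a 3 * b 2),
    a 6 * b 4 - a 4 * b 6 + (a 0 * b 2 - a 2 * b 0) - (a 3 * b 1 - a 1 * b 3),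
    a 4 * b 5 - a 5 * b 4 + (a 0 * b 3 - a 3 * b 0) - (a 1 * b 2 - a 2 * b 1)] := by
  funext k
  fin_cases k <;>
    simp [cross7, phi7, form3, Matrix.det_fin_three, e7] <;> ring

theorem dot7_cross_left (a b : V7) : dot7 a (cross7 a b) = 0 := by
  rw [cross_coords]
  simp [dot7]
  ring

theorem dot7_cross_right (a b : V7) : dot7 b (cross7 a b) = 0 := by
  rw [cross_coords]
  simp [dot7]
  ring

theorem dot7_cross_self (a b : V7) :
    dot7 (cross7 a b) (cross7 a b) = dot7 a a * dot7 b b - dot7 a b ^ 2 := by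
  rw [cross_coords]
  simp [dot7]
  ring

/-- two associative 3-planes in ℝ⁷ (3-dimensional subspaces
    closed under the cross product) cannot intersect in dimension 2;
    consequently they intersect in dimension 0, 1, or 3. -/
theorem stmt16 (V W : Submodule ℝ V7)
    (hV3 : Module.finrank ℝ V = 3) (hW3 : Module.finrank ℝ W = 3)
    (hV : ∀ a ∈ V, ∀ b ∈ V, cross7 a b ∈ V)
    (hW : ∀ a ∈ W, ∀ b ∈ W, cross7 a b ∈ W) :
    Module.finrank ℝ ↥(V ⊓ W) ≠ 2 ∧
      (Module.finrank ℝ ↥(V ⊓ W) = 0 ∨ Module.finrank ℝ ↥(V ⊓ W) = 1 ∨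
        Module.finrank ℝ ↥(V ⊓ W) = 3) := by
  have key : Module.finrank ℝ ↥(V ⊓ W) ≠ 2 := by
    intro h2
    let B := Module.finBasisOfFinrankEq ℝ ↥(V ⊓ W) h2
    obtain ⟨a, ha⟩ : ∃ a : V7, a = (B 0 : V7) := ⟨_, rfl⟩
    obtain ⟨b, hb⟩ : ∃ b : V7, b = (B 1 : V7) := ⟨_, rfl⟩
    have haU : a ∈ V ⊓ W := ha ▸ (B 0).2
    have hbU : b ∈ V ⊓ W := hb ▸ (B 1).2
    have hc : cross7 a b ∈ V ⊓ W := ⟨hV a haU.1 b hbU.1, hW a haU.2 b hbU.2⟩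
    have hli : ∀ s t : ℝ, s • a + t • b = 0 → s = 0 ∧ t = 0 := by
      intro s t hst
      have h := B.linearIndependent
      rw [Fintype.linearIndependent_iff] at h
      have h' := h ![s, t] (by
        apply Subtype.ext
        simpa [Fin.sum_univ_two, ← ha, ← hb] using hst)
      exact ⟨by simpa using h' 0, by simpa using h' 1⟩
    obtain ⟨s, t, hst⟩ : ∃ s t : ℝ, cross7 a b = s • a + t • b := by
      have h := congrArg Subtype.val (B.sum_repr ⟨_, hc⟩)
      refine ⟨B.repr ⟨_, hc⟩ 0, B.repr ⟨_, hc⟩ 1, ?_⟩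
      rw [Fin.sum_univ_two, Submodule.coe_add, Submodule.coe_smul, Submodule.coe_smul, ← ha, ← hb] at h
      exact h.symm
    have h0 : dot7 (cross7 a b) (cross7 a b) = 0 := by
      have h := dot7_comb s t a b (cross7 a b)
      rw [← hst, dot7_cross_left, dot7_cross_right] at h
      linarith
    rw [dot7_cross_self] at h0
    have hw : (-dot7 a b) • a + (dot7 a a) • b = 0 := by
      apply dot7_self
      rw [dot7_comb, dot7_comm a (_ + _), dot7_comm b (_ + _), dot7_comb, dot7_comb,
        dot7_comm b a]
      linear_combination dot7 a a * h0
    have haa := (hli _ _ hw).2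
    have h1 := (hli 1 0 (by rw [dot7_self haa]; simp)).1
    exact one_ne_zero h1
  have hle : Module.finrank ℝ ↥(V ⊓ W) ≤ 3 := hV3 ▸ Submodule.finrank_mono inf_le_left
  refine ⟨key, ?_⟩
  omega
end
end
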